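/- arXiv:2505.16071 — 4 statements merged into one kernel-verified Lean document; each statement's English description precedes it below -/
import Mathlib

section
/- Let k̂, n̂ ∈ ℝ³ be unit vectors with n̂ not parallel to k̂, and let h, h' ∈ {+1, −1}. Then the Levi-Civita contraction of polarisation tensors satisfies Σ_{i,j,l,m} ε_{ijm} k̂_m e^{(h)}_{lj}(−k̂) e^{(h')}_{li}(k̂) = −2 i h if h = h' and 0 if h ≠ h', where ε_{ijm} is the totally antisymmetric Levi-Civita symbol on three indices with ε_{123} = 1, and both polarisation tensors are built from the same reference vector n̂. -/
open scoped BigOperators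

noncomputable section

/-- Euclidean dot product on ℝ³ (realised as `Fin 3 → ℝ`). -/
def dot3 (v w : Fin 3 → ℝ) : ℝ := ∑ i, v i * w i

/-- Cross product on ℝ³. -/
def cross3 (v w : Fin 3 → ℝ) : Fin 3 → ℝ :=
  ![v 1 * w 2 - v 2 * w 1, v 2 * w 0 - v 0 * w 2, v 0 * w 1 - v 1 * w 0]

/-- The complex polarisation vector
`ê^{h}(k̂) = (n̂ − (n̂·k̂)k̂ + h i k̂×n̂)/√(2(1−(n̂·k̂)²))` for helicity `h = ±1`. -/
def polVec (h : ℝ) (k n : Fin 3 → ℝ) : Fin 3 → ℂ := fun i =>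
  (((n i - dot3 n k * k i : ℝ) : ℂ) + (h : ℂ) * Complex.I * ((cross3 k n i : ℝ) : ℂ)) /
    ((Real.sqrt (2 * (1 - dot3 n k ^ 2)) : ℝ) : ℂ)

/-- The polarisation tensor `e^{(h)}_{ij}(k̂) = √2 ê^{h}_i(k̂) ê^{h}_j(k̂)`. -/
def polTensor (h : ℝ) (k n : Fin 3 → ℝ) (i j : Fin 3) : ℂ :=
  ((Real.sqrt 2 : ℝ) : ℂ) * polVec h k n i * polVec h k n j

/-- The totally antisymmetric Levi-Civita symbol on three indices, with `ε 0 1 2 = 1`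
(indices `0,1,2` standing for `1,2,3`). -/
def lev (i j m : Fin 3) : ℝ :=
  (((j : ℕ) : ℝ) - ((i : ℕ) : ℝ)) * (((m : ℕ) : ℝ) - ((j : ℕ) : ℝ)) *
    (((m : ℕ) : ℝ) - ((i : ℕ) : ℝ)) / 2

/-!
Reversing `k` only changes the sign of `k × n`, so `ê^h(-k) = ê^{-h}(k)`, and with
`u = ê^{-h}(k)`, `v = ê^{h'}(k)` the contraction factors as `2 (u · v) (v · (u × k))`.
Both vectors are combinations of `a = n - (n · k) k` and `b = k × n`, which are orthogonal and of
the same squared length `1 - (n · k)²`, and `· × k` sends `a` to `-b` and `b` to `a`; hence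
`u · v = (1 + h h') / 2` and `v · (u × k) = -i (h + h') / 2`.
-/

section TransversePart

open Matrix

variable {ι R : Type*} [Fintype ι] [CommRing R]

/-- The component `n - (n ⬝ᵥ k) • k` of `n` orthogonal to a unit vector `k`; for `k` that is not
of unit length it is not the orthogonal projection. -/
def transversePart (k n : ι → R) : ι → R := n - (n ⬝ᵥ k) • k

theorem transversePart_dotProduct_self {k : ι → R} (hk : k ⬝ᵥ k = 1) (n : ι → R) :
    transversePart k n ⬝ᵥ transversePart k n = n ⬝ᵥ n - (n ⬝ᵥ k) ^ 2 := by
  simp only [transversePart, sub_dotProduct, dotProduct_sub, smul_dotProduct, dotProduct_smul,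
    smul_eq_mul, hk, dotProduct_comm k n]
  ring

theorem sq_dotProduct_lt_dotProduct_self [LinearOrder R] [IsStrictOrderedRing R] {k n : ι → R}
    (hk : k ⬝ᵥ k = 1) (hpar : ¬ ∃ c : R, n = c • k) : (n ⬝ᵥ k) ^ 2 < n ⬝ᵥ n := by
  have hne : transversePart k n ≠ 0 := fun h ↦ hpar ⟨n ⬝ᵥ k, sub_eq_zero.mp h⟩
  have hpos : 0 < transversePart k n ⬝ᵥ transversePart k n :=
    (Finset.sum_nonneg fun i _ ↦ mul_self_nonneg (transversePart k n i)).lt_of_ne'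
      (dotProduct_self_eq_zero.not.mpr hne)
  rwa [transversePart_dotProduct_self hk, sub_pos] at hpos

theorem transversePart_dotProduct_cross (k n : Fin 3 → R) :
    transversePart k n ⬝ᵥ k ⨯₃ n = 0 := by
  simp only [transversePart, sub_dotProduct, smul_dotProduct, dot_self_cross, dot_cross_self,
    smul_zero, sub_zero]

theorem cross_dotProduct_cross_self {k : Fin 3 → R} (hk : k ⬝ᵥ k = 1) (n : Fin 3 → R) :
    k ⨯₃ n ⬝ᵥ k ⨯₃ n = n ⬝ᵥ n - (n ⬝ᵥ k) ^ 2 := by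
  rw [cross_dot_cross, hk, dotProduct_comm k n]
  ring

theorem transversePart_cross (k n : Fin 3 → R) : transversePart k n ⨯₃ k = -(k ⨯₃ n) := by
  simp only [transversePart, map_sub, map_smul, LinearMap.sub_apply, LinearMap.smul_apply,
    cross_self, smul_zero, sub_zero, cross_anticomm]

theorem cross_cross_eq_transversePart {k : Fin 3 → R} (hk : k ⬝ᵥ k = 1) (n : Fin 3 → R) :
    k ⨯₃ n ⨯₃ k = transversePart k n := by
  rw [cross_cross_eq_smul_sub_smul, hk, one_smul, transversePart]

/-- The unnormalised polarisation vector `n - (n ⬝ᵥ k) • k + t • k × n`; the polarisation vector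
of helicity `h` is proportional to the case `t = h * i`. -/
def transverseVec (t : R) (k n : Fin 3 → R) : Fin 3 → R := transversePart k n + t • k ⨯₃ n

theorem transverseVec_dotProduct {k : Fin 3 → R} (hk : k ⬝ᵥ k = 1) (n : Fin 3 → R) (s t : R) :
    transverseVec s k n ⬝ᵥ transverseVec t k n = (1 + s * t) * (n ⬝ᵥ n - (n ⬝ᵥ k) ^ 2) := by
  simp only [transverseVec, add_dotProduct, dotProduct_add, smul_dotProduct, dotProduct_smul,
    smul_eq_mul, dotProduct_comm (k ⨯₃ n) (transversePart k n), transversePart_dotProduct_self hk,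
    transversePart_dotProduct_cross, cross_dotProduct_cross_self hk]
  ring

theorem transverseVec_cross {k : Fin 3 → R} (hk : k ⬝ᵥ k = 1) (n : Fin 3 → R) (t : R) :
    transverseVec t k n ⨯₃ k = t • transversePart k n - k ⨯₃ n := by
  simp only [transverseVec, map_add, map_smul, LinearMap.add_apply, LinearMap.smul_apply,
    transversePart_cross, cross_cross_eq_transversePart hk]
  abel

theorem transverseVec_tripleProduct {k : Fin 3 → R} (hk : k ⬝ᵥ k = 1) (n : Fin 3 → R) (s t : R) :
    transverseVec t k n ⬝ᵥ transverseVec s k n ⨯₃ k = (s - t) * (n ⬝ᵥ n - (n ⬝ᵥ k) ^ 2) := by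
  rw [transverseVec_cross hk]
  simp only [transverseVec, add_dotProduct, dotProduct_sub, smul_dotProduct, dotProduct_smul,
    smul_eq_mul, dotProduct_comm (k ⨯₃ n) (transversePart k n), transversePart_dotProduct_self hk,
    transversePart_dotProduct_cross, cross_dotProduct_cross_self hk]
  ring

end TransversePart

section Polarisation

open Complex Matrix

theorem ofReal_dot3 (v w : Fin 3 → ℝ) : (dot3 v w : ℂ) = (ofReal ∘ v) ⬝ᵥ (ofReal ∘ w) :=
  ofRealHom.map_dotProduct v w

theorem cross3_eq_cross (v w : Fin 3 → ℝ) : cross3 v w = v ⨯₃ w := (cross_apply v w).symm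

theorem ofReal_cross3 (v w : Fin 3 → ℝ) : ofReal ∘ cross3 v w = (ofReal ∘ v) ⨯₃ (ofReal ∘ w) := by
  ext i
  fin_cases i <;> simp [cross3, cross_apply]

theorem polVec_eq_smul_transverseVec (h : ℝ) (k n : Fin 3 → ℝ) :
    polVec h k n = (√(2 * (1 - dot3 n k ^ 2)) : ℂ)⁻¹ •
      transverseVec (h * I) (ofReal ∘ k) (ofReal ∘ n) := by
  ext i
  simp only [polVec, transverseVec, transversePart, ← ofReal_dot3, ← ofReal_cross3, Pi.smul_apply,
    Pi.add_apply, Pi.sub_apply, Function.comp_apply, smul_eq_mul, ofReal_sub, ofReal_mul]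
  rw [div_eq_inv_mul]

theorem polVec_neg (h : ℝ) (k n : Fin 3 → ℝ) : polVec h (-k) n = polVec (-h) k n := by
  have hdot : dot3 n (-k) = -dot3 n k := dotProduct_neg n k
  have hcross : cross3 (-k) n = -cross3 k n := by
    simp only [cross3_eq_cross, map_neg, LinearMap.neg_apply]
  ext i
  simp [polVec, hdot, hcross]

theorem inv_sqrt_two_mul_sq_mul {x : ℝ} (hx : 0 < x) :
    (√(2 * x) : ℂ)⁻¹ ^ 2 * x = 1 / 2 := by
  rw [inv_pow, ← ofReal_pow, Real.sq_sqrt (by positivity), ofReal_mul, ofReal_ofNat]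
  have hx' : (x : ℂ) ≠ 0 := ofReal_ne_zero.mpr hx.ne'
  field_simp

section Unit

variable {k n : Fin 3 → ℝ} (hk : dot3 k k = 1) (hn : dot3 n n = 1) (hnk : dot3 n k ^ 2 < 1)
include hk hn hnk

theorem polVec_dotProduct_polVec (g h : ℝ) :
    polVec g k n ⬝ᵥ polVec h k n = (1 - g * h) / 2 := by
  have hkC : (ofReal ∘ k) ⬝ᵥ (ofReal ∘ k) = 1 := by rw [← ofReal_dot3, hk, ofReal_one]
  have hnorm := inv_sqrt_two_mul_sq_mul (sub_pos.mpr hnk)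
  simp only [polVec_eq_smul_transverseVec, smul_dotProduct, dotProduct_smul, smul_eq_mul,
    transverseVec_dotProduct hkC, ← ofReal_dot3, hn]
  push_cast at hnorm ⊢
  linear_combination (1 - g * h) * hnorm +
    (√(2 * (1 - dot3 n k ^ 2)) : ℂ)⁻¹ ^ 2 * (1 - dot3 n k ^ 2) * g * h * I_sq

theorem polVec_tripleProduct (g h : ℝ) :
    polVec h k n ⬝ᵥ polVec g k n ⨯₃ (ofReal ∘ k) = I * (g - h) / 2 := by
  have hkC : (ofReal ∘ k) ⬝ᵥ (ofReal ∘ k) = 1 := by rw [← ofReal_dot3, hk, ofReal_one]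
  have hnorm := inv_sqrt_two_mul_sq_mul (sub_pos.mpr hnk)
  simp only [polVec_eq_smul_transverseVec, map_smul, LinearMap.smul_apply, smul_dotProduct,
    dotProduct_smul, smul_eq_mul, transverseVec_tripleProduct hkC, ← ofReal_dot3, hn]
  push_cast at hnorm ⊢
  linear_combination I * (g - h) * hnorm

end Unit

theorem sum_lev_eq_tripleProduct (x y z : Fin 3 → ℂ) :
    ∑ i, ∑ j, ∑ m, (lev i j m : ℂ) * x i * y j * z m = x ⬝ᵥ y ⨯₃ z := by
  simp only [Fin.sum_univ_three, lev, vec3_dotProduct, cross_apply, cons_val]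
  norm_num
  ring

theorem sum_lev_polTensor_eq (z : Fin 3 → ℝ) (h h' : ℝ) (k k' n n' : Fin 3 → ℝ) :
    ∑ i, ∑ j, ∑ l, ∑ m, (lev i j m : ℂ) * z m * polTensor h k n l j * polTensor h' k' n' l i =
      2 * (polVec h k n ⬝ᵥ polVec h' k' n') *
        (polVec h' k' n' ⬝ᵥ polVec h k n ⨯₃ (ofReal ∘ z)) := by
  have hsqrt : (√2 : ℂ) ^ 2 = 2 := by
    rw [← ofReal_pow, Real.sq_sqrt zero_le_two, ofReal_ofNat]
  simp only [← sum_lev_eq_tripleProduct, Finset.mul_sum]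
  refine Finset.sum_congr rfl fun i _ ↦ Finset.sum_congr rfl fun j _ ↦ ?_
  rw [Finset.sum_comm]
  refine Finset.sum_congr rfl fun m _ ↦ ?_
  rw [dotProduct, Finset.mul_sum, Finset.sum_mul]
  refine Finset.sum_congr rfl fun l _ ↦ ?_
  simp only [polTensor, Function.comp_apply]
  linear_combination (lev i j m : ℂ) * z m * polVec h k n l * polVec h k n j *
    polVec h' k' n' l * polVec h' k' n' i * hsqrt

end Polarisation

theorem polTensor_leviCivita_contraction_general (k n : Fin 3 → ℝ)
    (hk : dot3 k k = 1) (hn : dot3 n n = 1)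
    (hpar : ¬ ∃ c : ℝ, n = c • k) (h h' : ℝ) :
    ∑ i, ∑ j, ∑ l, ∑ m,
        ((lev i j m : ℝ) : ℂ) * ((k m : ℝ) : ℂ) * polTensor h (-k) n l j * polTensor h' k n l i
      = -Complex.I * (1 + h * h') * (h + h') / 2 := by
  have hnk : dot3 n k ^ 2 < 1 := (sq_dotProduct_lt_dotProduct_self hk hpar).trans_eq hn
  rw [sum_lev_polTensor_eq, polVec_neg,
    polVec_dotProduct_polVec hk hn hnk, polVec_tripleProduct hk hn hnk]
  push_cast
  ring

/-- The Levi-Civita contraction of polarisation tensors: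
`Σ_{i,j,l,m} ε_{ijm} k̂_m e^{(h)}_{lj}(−k̂) e^{(h')}_{li}(k̂) = −2 i h δ_{hh'}`. -/
theorem polTensor_leviCivita_contraction (k n : Fin 3 → ℝ)
    (hk : dot3 k k = 1) (hn : dot3 n n = 1)
    (hpar : ¬ ∃ c : ℝ, n = c • k) (h h' : ℝ)
    (hh : h = 1 ∨ h = -1) (hh' : h' = 1 ∨ h' = -1) :
    ∑ i, ∑ j, ∑ l, ∑ m,
        ((lev i j m : ℝ) : ℂ) * ((k m : ℝ) : ℂ) * polTensor h (-k) n l j * polTensor h' k n l i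
      = if h = h' then -2 * Complex.I * (h : ℂ) else 0 := by
  rw [polTensor_leviCivita_contraction_general k n hk hn hpar]
  rcases hh with rfl | rfl <;> rcases hh' with rfl | rfl <;> norm_num <;> ring

end
end

section
/- Let k₁, k₂, k₃ ∈ ℂ each have strictly negative imaginary part, set E := k₁ + k₂ + k₃, e₂ := k₁k₂ + k₁k₃ + k₂k₃, e₃ := k₁k₂k₃ (note E ≠ 0 since Im E < 0). For η₀ < 0 the integral J(η₀) := ∫_{−∞}^{η₀} η^{−2} (1 − i k₁ η)(1 − i k₂ η)(1 − i k₃ η) e^{iEη} dη converges, and the boundary-divergence-subtracted limit exists and equals lim_{η₀ → 0⁻} [ J(η₀) + 1/η₀ ] = i·(−E³ + E·e₂ + e₃)/E². (This is the exact evaluation of the time integral producing the mixed inflaton–graviton cubic wavefunction coefficient, whose 1/η₀ piece is the IR divergence residing in the phase of the wavefunction.) -/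
open Filter MeasureTheory

noncomputable section

/-- The integrand `η^{−2} (1 − i k₁ η)(1 − i k₂ η)(1 − i k₃ η) e^{i(k₁+k₂+k₃)η}`
producing the mixed inflaton–graviton cubic wavefunction coefficient. -/
def cubicIntegrand (k₁ k₂ k₃ : ℂ) (η : ℝ) : ℂ :=
  ((η : ℂ) ^ 2)⁻¹ * (1 - Complex.I * k₁ * η) * (1 - Complex.I * k₂ * η) *
    (1 - Complex.I * k₃ * η) * Complex.exp (Complex.I * (k₁ + k₂ + k₃) * η)

/-! With `a = i (k₁ + k₂ + k₃)`, the integrand is a combination of `ηⁿ e^{aη}`, `n = -2, …, 1`.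
Integration by parts, `a ∫ ηⁿ e^{aη} = η₀ⁿ e^{aη₀} - n ∫ ηⁿ⁻¹ e^{aη}`, evaluates the last two
outright. The first two are exponential integrals, but they enter in the combination
`∫ (η⁻² - a η⁻¹) e^{aη}`, which the case `n = -1` evaluates to `-η₀⁻¹ e^{aη₀}`: no logarithm
survives, and the only divergence at `η₀ = 0` is the pole `-1/η₀`. -/

section LaurentMonomials

variable {a : ℂ} {η₀ : ℝ}

lemma tendsto_zpow_mul_cexp_atBot (n : ℤ) (ha : 0 < a.re) :
    Tendsto (fun η : ℝ => (η : ℂ) ^ n * Complex.exp (a * η)) atBot (nhds 0) := by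
  rw [tendsto_zero_iff_norm_tendsto_zero]
  refine ((tendsto_rpow_mul_exp_neg_mul_atTop_nhds_zero n a.re ha).comp
    tendsto_neg_atBot_atTop).congr' ?_
  filter_upwards [eventually_le_atBot (0 : ℝ)] with η hη
  simp [Complex.norm_exp, abs_of_nonpos hη]

lemma hasDerivAt_zpow_mul_cexp (n : ℤ) (a : ℂ) {η : ℝ} (hη : η ≠ 0) :
    HasDerivAt (fun η : ℝ => (η : ℂ) ^ n * Complex.exp (a * η))
      (n * ((η : ℂ) ^ (n - 1) * Complex.exp (a * η)) +
        a * ((η : ℂ) ^ n * Complex.exp (a * η))) η := by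
  have hpow := hasDerivAt_zpow n (η : ℂ) (Or.inl (Complex.ofReal_ne_zero.2 hη))
  have hexp := ((hasDerivAt_id (η : ℂ)).const_mul a).cexp
  refine (hpow.mul hexp).comp_ofReal.congr_deriv ?_
  simp only [id_eq]
  ring

lemma continuousOn_zpow_mul_cexp (n : ℤ) (a : ℂ) :
    ContinuousOn (fun η : ℝ => (η : ℂ) ^ n * Complex.exp (a * η)) {0}ᶜ := fun _ hη =>
  (hasDerivAt_zpow_mul_cexp n a hη).continuousAt.continuousWithinAt

lemma isBigO_zpow_mul_cexp_atBot (n : ℤ) {b : ℂ} (hba : b.re < a.re) :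
    (fun η : ℝ => (η : ℂ) ^ n * Complex.exp (a * η)) =O[atBot]
      fun η : ℝ => Complex.exp (b * η) := by
  have hpos : 0 < (a - b).re := by simpa using hba
  have hbounded := (tendsto_zpow_mul_cexp_atBot n hpos).isBigO_one ℂ
  refine (hbounded.mul (Asymptotics.isBigO_refl _ _)).congr (fun η => ?_) (fun η => one_mul _)
  rw [mul_assoc, ← Complex.exp_add, ← add_mul, sub_add_cancel]

lemma integrableOn_Iic_zpow_mul_cexp (n : ℤ) (ha : 0 < a.re) (hη₀ : η₀ < 0) :
    IntegrableOn (fun η : ℝ => (η : ℂ) ^ n * Complex.exp (a * η)) (Set.Iic η₀) := by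
  have hcont : ContinuousOn (fun η : ℝ => (η : ℂ) ^ n * Complex.exp (a * η)) (Set.Iic η₀) :=
    (continuousOn_zpow_mul_cexp n a).mono fun _ hη => (hη.trans_lt hη₀).ne
  have hhalf : 0 < (a / 2).re ∧ (a / 2).re < a.re := by simpa using ha
  have hexp : IntegrableAtFilter (fun η : ℝ => Complex.exp (a / 2 * η)) atBot :=
    ⟨Set.Iic 0, Iic_mem_atBot 0, integrableOn_exp_mul_complex_Iic hhalf.1 0⟩
  exact (hcont.locallyIntegrableOn measurableSet_Iic).integrableOn_of_isBigO_atBot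
    (isBigO_zpow_mul_cexp_atBot n hhalf.2) hexp

lemma mul_integral_Iic_zpow_mul_cexp (n : ℤ) (ha : 0 < a.re) (hη₀ : η₀ < 0) :
    a * ∫ η : ℝ in Set.Iic η₀, (η : ℂ) ^ n * Complex.exp (a * η) =
      (η₀ : ℂ) ^ n * Complex.exp (a * η₀) -
        n * ∫ η : ℝ in Set.Iic η₀, (η : ℂ) ^ (n - 1) * Complex.exp (a * η) := by
  have hlower := (integrableOn_Iic_zpow_mul_cexp (n - 1) ha hη₀).const_mul (n : ℂ)
  have hsame := (integrableOn_Iic_zpow_mul_cexp n ha hη₀).const_mul a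
  have hFTC := integral_Iic_of_hasDerivAt_of_tendsto'
    (fun η hη => hasDerivAt_zpow_mul_cexp n a (hη.trans_lt hη₀).ne) (hlower.add hsame)
    (tendsto_zpow_mul_cexp_atBot n ha)
  rw [integral_add hlower hsame, integral_const_mul, integral_const_mul, sub_zero] at hFTC
  exact eq_sub_of_add_eq' hFTC

lemma integral_Iic_inv_sq_sub_mul_inv_mul_cexp (ha : 0 < a.re) (hη₀ : η₀ < 0) :
    (∫ η : ℝ in Set.Iic η₀, (η : ℂ) ^ (-2 : ℤ) * Complex.exp (a * η)) -
        a * ∫ η : ℝ in Set.Iic η₀, (η : ℂ) ^ (-1 : ℤ) * Complex.exp (a * η) =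
      -((η₀ : ℂ)⁻¹ * Complex.exp (a * η₀)) := by
  have hparts := mul_integral_Iic_zpow_mul_cexp (-1) ha hη₀
  rw [show (-1 : ℤ) - 1 = -2 by rfl, zpow_neg_one, Int.cast_neg, Int.cast_one] at hparts
  linear_combination -hparts

lemma integral_Iic_mul_cexp (ha : 0 < a.re) (hη₀ : η₀ < 0) :
    ∫ η : ℝ in Set.Iic η₀, (η : ℂ) * Complex.exp (a * η) =
      (η₀ / a - 1 / a ^ 2) * Complex.exp (a * η₀) := by
  have ha₀ : a ≠ 0 := fun h => by simp [h] at ha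
  have hparts := mul_integral_Iic_zpow_mul_cexp 1 ha hη₀
  simp only [zpow_one, sub_self, zpow_zero, Int.cast_one, one_mul,
    integral_exp_mul_complex_Iic ha] at hparts
  refine mul_left_cancel₀ ha₀ (hparts.trans ?_)
  field_simp

end LaurentMonomials

lemma tendsto_one_sub_cexp_div (a : ℂ) :
    Tendsto (fun η : ℝ => (1 - Complex.exp (a * η)) / η) (nhdsWithin 0 {0}ᶜ) (nhds (-a)) := by
  have hderiv : HasDerivAt (fun η : ℝ => Complex.exp (a * η)) a 0 := by
    simpa using ((hasDerivAt_id ((0 : ℝ) : ℂ)).const_mul a).cexp.comp_ofReal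
  refine hderiv.tendsto_slope_zero.neg.congr fun η => ?_
  simp only [zero_add, Complex.ofReal_zero, mul_zero, Complex.exp_zero, Complex.real_smul,
    Complex.ofReal_inv]
  ring

lemma tendsto_neg_inv_add_mul_cexp_add_inv (a : ℂ) {g : ℝ → ℂ} (hg : ContinuousAt g 0) :
    Tendsto (fun η : ℝ => (-1 / (η : ℂ) + g η) * Complex.exp (a * η) + 1 / (η : ℂ))
      (nhdsWithin 0 {0}ᶜ) (nhds (-a + g 0)) := by
  have hregular : ContinuousAt (fun η : ℝ => g η * Complex.exp (a * η)) 0 :=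
    hg.mul (by fun_prop)
  have hlim := (tendsto_one_sub_cexp_div a).add (hregular.tendsto.mono_left nhdsWithin_le_nhds)
  simp only [Complex.ofReal_zero, mul_zero, Complex.exp_zero, mul_one] at hlim
  refine hlim.congr fun η => ?_
  ring

section CubicIntegrand

variable {k₁ k₂ k₃ : ℂ} {η₀ : ℝ}

lemma cubicIntegrand_eq_laurent (k₁ k₂ k₃ : ℂ) {η : ℝ} (hη : η ≠ 0) :
    cubicIntegrand k₁ k₂ k₃ η =
      (η : ℂ) ^ (-2 : ℤ) * Complex.exp (Complex.I * (k₁ + k₂ + k₃) * η)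
      - Complex.I * (k₁ + k₂ + k₃) *
        ((η : ℂ) ^ (-1 : ℤ) * Complex.exp (Complex.I * (k₁ + k₂ + k₃) * η))
      - (k₁ * k₂ + k₁ * k₃ + k₂ * k₃) *
        Complex.exp (Complex.I * (k₁ + k₂ + k₃) * η)
      + Complex.I * (k₁ * k₂ * k₃) *
        ((η : ℂ) * Complex.exp (Complex.I * (k₁ + k₂ + k₃) * η)) := by
  have hη' : (η : ℂ) ≠ 0 := Complex.ofReal_ne_zero.2 hη
  rw [cubicIntegrand]
  generalize Complex.exp (Complex.I * (k₁ + k₂ + k₃) * η) = e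
  simp only [zpow_neg, zpow_ofNat]
  field_simp
  linear_combination e * ((k₁ * k₂ + k₁ * k₃ + k₂ * k₃) * (η : ℂ) ^ 2
    - Complex.I * k₁ * k₂ * k₃ * (η : ℂ) ^ 3) * Complex.I_sq

lemma integrableOn_Iic_cubicIntegrand (hE : (k₁ + k₂ + k₃).im < 0) (hη₀ : η₀ < 0) :
    IntegrableOn (cubicIntegrand k₁ k₂ k₃) (Set.Iic η₀) := by
  have ha : 0 < (Complex.I * (k₁ + k₂ + k₃)).re := by rwa [Complex.I_mul_re, neg_pos]
  have hint (n : ℤ) := integrableOn_Iic_zpow_mul_cexp n ha hη₀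
  have hexp := integrableOn_exp_mul_complex_Iic ha η₀
  have hlinear : IntegrableOn
      (fun η : ℝ => (η : ℂ) * Complex.exp (Complex.I * (k₁ + k₂ + k₃) * η)) (Set.Iic η₀) := by
    simpa only [zpow_one] using hint 1
  refine IntegrableOn.congr_fun ?_
    (fun η hη => (cubicIntegrand_eq_laurent k₁ k₂ k₃ (hη.trans_lt hη₀).ne).symm) measurableSet_Iic
  exact (((hint _).sub ((hint _).const_mul _)).sub (hexp.const_mul _)).add
    (hlinear.const_mul _)

lemma integral_Iic_cubicIntegrand (hE : (k₁ + k₂ + k₃).im < 0) (hη₀ : η₀ < 0) :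
    ∫ η in Set.Iic η₀, cubicIntegrand k₁ k₂ k₃ η =
      (-1 / (η₀ : ℂ) +
        ((k₁ * k₂ * k₃ * η₀ + Complex.I * (k₁ * k₂ + k₁ * k₃ + k₂ * k₃)) / (k₁ + k₂ + k₃) +
          Complex.I * (k₁ * k₂ * k₃) / (k₁ + k₂ + k₃) ^ 2)) *
        Complex.exp (Complex.I * (k₁ + k₂ + k₃) * η₀) := by
  have ha : 0 < (Complex.I * (k₁ + k₂ + k₃)).re := by rwa [Complex.I_mul_re, neg_pos]
  have hint (n : ℤ) := integrableOn_Iic_zpow_mul_cexp n ha hη₀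
  have hdiv := (hint (-2)).fun_sub ((hint (-1)).const_mul (Complex.I * (k₁ + k₂ + k₃)))
  have hexp := (integrableOn_exp_mul_complex_Iic ha η₀).const_mul (k₁ * k₂ + k₁ * k₃ + k₂ * k₃)
  have hlinear := (hint 1).const_mul (Complex.I * (k₁ * k₂ * k₃))
  simp only [zpow_one] at hlinear
  have hlaurent : Set.EqOn (cubicIntegrand k₁ k₂ k₃) _ (Set.Iic η₀) := fun η hη =>
    cubicIntegrand_eq_laurent k₁ k₂ k₃ (hη.trans_lt hη₀).ne
  rw [setIntegral_congr_fun measurableSet_Iic hlaurent, integral_add (hdiv.fun_sub hexp) hlinear,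
    integral_sub hdiv hexp, integral_sub (hint _) ((hint _).const_mul _)]
  simp only [integral_const_mul]
  rw [integral_Iic_inv_sq_sub_mul_inv_mul_cexp ha hη₀, integral_exp_mul_complex_Iic ha,
    integral_Iic_mul_cexp ha hη₀]
  have hinv : (Complex.I * (k₁ + k₂ + k₃))⁻¹ = -(Complex.I * (k₁ + k₂ + k₃)⁻¹) := by
    rw [mul_inv, Complex.inv_I, neg_mul]
  simp only [div_eq_mul_inv, ← inv_pow, hinv]
  linear_combination -(k₁ * k₂ * k₃ * (η₀ * (k₁ + k₂ + k₃)⁻¹ + Complex.I * (k₁ + k₂ + k₃)⁻¹ ^ 2) *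
    Complex.exp (Complex.I * (k₁ + k₂ + k₃) * η₀)) * Complex.I_sq

end CubicIntegrand

theorem cubic_wavefunction_integral_general (k₁ k₂ k₃ : ℂ) (hE : (k₁ + k₂ + k₃).im < 0) :
    (∀ η₀ : ℝ, η₀ < 0 → IntegrableOn (cubicIntegrand k₁ k₂ k₃) (Set.Iic η₀)) ∧
    Tendsto
      (fun η₀ : ℝ => (∫ η in Set.Iic η₀, cubicIntegrand k₁ k₂ k₃ η) + 1 / (η₀ : ℂ))
      (nhdsWithin 0 (Set.Iio 0))
      (nhds (Complex.I *
        (-(k₁ + k₂ + k₃) ^ 3 + (k₁ + k₂ + k₃) * (k₁ * k₂ + k₁ * k₃ + k₂ * k₃)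
          + k₁ * k₂ * k₃) / (k₁ + k₂ + k₃) ^ 2)) := by
  refine ⟨fun η₀ hη₀ => integrableOn_Iic_cubicIntegrand hE hη₀, ?_⟩
  have hE₀ : k₁ + k₂ + k₃ ≠ 0 := fun h => by simp [h] at hE
  let g (η : ℝ) : ℂ :=
    (k₁ * k₂ * k₃ * η + Complex.I * (k₁ * k₂ + k₁ * k₃ + k₂ * k₃)) / (k₁ + k₂ + k₃) +
      Complex.I * (k₁ * k₂ * k₃) / (k₁ + k₂ + k₃) ^ 2
  have hg : Continuous g := by fun_prop
  have hlim := (tendsto_neg_inv_add_mul_cexp_add_inv (Complex.I * (k₁ + k₂ + k₃))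
    hg.continuousAt).mono_left (nhdsLT_le_nhdsNE 0)
  convert hlim.congr' ?_ using 2
  · simp only [g, Complex.ofReal_zero, mul_zero, zero_add]
    field_simp
    ring
  · filter_upwards [self_mem_nhdsWithin] with η₀ hη₀
    rw [integral_Iic_cubicIntegrand hE hη₀]

/-- With each `kⱼ` given a strictly negative imaginary part (Bunch–Davies iε
prescription), the integral `J(η₀) = ∫_{−∞}^{η₀}` of the cubic integrand converges
for every `η₀ < 0`, and the boundary-divergence-subtracted limit is
`lim_{η₀→0⁻} [J(η₀) + 1/η₀] = i (−E³ + E e₂ + e₃)/E²` where `E = k₁+k₂+k₃`,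
`e₂ = k₁k₂+k₁k₃+k₂k₃`, `e₃ = k₁k₂k₃`. -/
theorem cubic_wavefunction_integral (k₁ k₂ k₃ : ℂ)
    (h₁ : k₁.im < 0) (h₂ : k₂.im < 0) (h₃ : k₃.im < 0) :
    (∀ η₀ : ℝ, η₀ < 0 → IntegrableOn (cubicIntegrand k₁ k₂ k₃) (Set.Iic η₀)) ∧
    Tendsto
      (fun η₀ : ℝ => (∫ η in Set.Iic η₀, cubicIntegrand k₁ k₂ k₃ η) + 1 / (η₀ : ℂ))
      (nhdsWithin 0 (Set.Iio 0))
      (nhds (Complex.I *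
        (-(k₁ + k₂ + k₃) ^ 3 + (k₁ + k₂ + k₃) * (k₁ * k₂ + k₁ * k₃ + k₂ * k₃)
          + k₁ * k₂ * k₃) / (k₁ + k₂ + k₃) ^ 2)) := by
  exact cubic_wavefunction_integral_general k₁ k₂ k₃ (by simp only [Complex.add_im]; linarith)

end
end

section
/- Let s ∈ ℂ have strictly negative imaginary part, and let K(η,s) := (1 − i s η) e^{i s η}, so that ∂_η K(η,s) = s² η e^{i s η} and (∂_η K)² − s² K² = e^{2isη}(2s⁴η² + 2is³η − s²). For η₀ < 0 the integral I(η₀) := ∫_{−∞}^{η₀} η^{−1} [ (∂_η K(η,s))² − s² K(η,s)² ] dη = ∫_{−∞}^{η₀} e^{2isη} ( 2s⁴η + 2is³ − s²/η ) dη converges, the complex number −2isη₀ has strictly positive real part, and the logarithmically-subtracted limit exists and equals lim_{η₀ → 0⁻} [ I(η₀) + s²·Log(−2 i s η₀) ] = s²·( 3/2 − γ ), where Log is the principal branch of the complex logarithm and γ is the Euler–Mascheroni constant. (This is the exact evaluation of the time integral producing the parity-odd Chern–Simons correction to the graviton quadratic wavefunction coefficient.) -/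
open Filter MeasureTheory

noncomputable section

/-- The bulk-to-boundary propagator `K(η,s) = (1 − i s η) e^{i s η}` with complex
momentum `s`, as a function of real conformal time. -/
def KbbS (s : ℂ) (η : ℝ) : ℂ :=
  (1 - Complex.I * s * η) * Complex.exp (Complex.I * s * η)

/-- The integrand `η^{−1} [(∂_η K)² − s² K²] = e^{2isη} (2s⁴η + 2is³ − s²/η)`
producing the parity-odd Chern–Simons correction to the graviton quadratic
wavefunction coefficient. -/
def csIntegrand (s : ℂ) (η : ℝ) : ℂ :=
  Complex.exp (2 * Complex.I * s * η) *
    (2 * s ^ 4 * η + 2 * Complex.I * s ^ 3 - s ^ 2 / η)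

/-!
Splitting off the `1/η` term, the rest of the integrand is an exponential times an affine function
and integrates in closed form, while the `1/η` term contributes `s² E₁(-2isη₀)`. So everything
reduces to `E₁(z) + log z → -γ` as `z → 0` in the right half-plane. There `E₁ + log` has derivative
`(1 - e^{-z})/z`, of norm at most `1`, so it is `1`-Lipschitz and its limit at `0` can be computed
along the positive real axis, where integration by parts turns it into
`∫₀^∞ log t e^{-t} dt`, the derivative `-γ` of `Γ` at `1`.
-/

open Set Topology

lemma norm_one_sub_exp_neg_le {z : ℂ} (hz : 0 ≤ z.re) : ‖1 - Complex.exp (-z)‖ ≤ ‖z‖ := by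
  have hderiv : ∀ w ∈ {w : ℂ | 0 ≤ w.re},
      HasDerivWithinAt (fun w : ℂ => Complex.exp (-w)) (-Complex.exp (-w)) {w | 0 ≤ w.re} w :=
    fun w _ => by simpa using (hasDerivAt_neg w).cexp.hasDerivWithinAt
  have hbound : ∀ w ∈ {w : ℂ | 0 ≤ w.re}, ‖-Complex.exp (-w)‖ ≤ 1 := fun w hw => by
    simpa [Complex.norm_exp] using hw
  simpa using (convex_halfSpace_re_ge 0).norm_image_sub_le_of_norm_hasDerivWithin_le
    hderiv hbound hz (show (0 : ℂ) ∈ {w : ℂ | 0 ≤ w.re} by simp)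

/-- The exponential integral `E₁` on the half-plane `0 < re z`; elsewhere the integral need not
converge and the value may be junk. -/
def expIntegralE₁ (z : ℂ) : ℂ :=
  ∫ t in Ioi (1 : ℝ), Complex.exp (-z * t) / t

lemma integrableOn_exp_neg_mul_div_Ioi {z : ℂ} (hz : 0 < z.re) {a : ℝ} (ha : 0 < a) :
    IntegrableOn (fun t : ℝ => Complex.exp (-z * t) / t) (Ioi a) := by
  have hexp : IntegrableOn (fun t : ℝ => Complex.exp (-z * t)) (Ioi a) :=
    integrableOn_exp_mul_complex_Ioi (by simpa) a
  refine (hexp.norm.mul_const a⁻¹).mono' (Measurable.aestronglyMeasurable (by fun_prop)) ?_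
  refine ae_restrict_of_forall_mem measurableSet_Ioi fun t (ht : a < t) => ?_
  rw [norm_div, div_eq_mul_inv, Complex.norm_of_nonneg (ha.trans ht).le]
  gcongr

lemma hasDerivAt_expIntegralE₁ {z : ℂ} (hz : 0 < z.re) :
    HasDerivAt expIntegralE₁ (-(Complex.exp (-z) / z)) z := by
  have hnhds : {w : ℂ | z.re / 2 < w.re} ∈ 𝓝 z :=
    (Complex.isOpen_re_gt _).mem_nhds (half_lt_self hz)
  have hbound : ∀ t ∈ Ioi (1 : ℝ), ∀ w ∈ {w : ℂ | z.re / 2 < w.re},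
      ‖-Complex.exp (-w * t)‖ ≤ Real.exp (-(z.re / 2) * t) := by
    intro t (ht : 1 < t) w (hw : z.re / 2 < w.re)
    have : z.re / 2 * t ≤ w.re * t := by gcongr
    simpa [Complex.norm_exp] using this
  have hderiv : ∀ t ∈ Ioi (1 : ℝ), ∀ w ∈ {w : ℂ | z.re / 2 < w.re},
      HasDerivAt (fun w : ℂ => Complex.exp (-w * t) / t) (-Complex.exp (-w * t)) w := by
    intro t (ht : 1 < t) w _
    have ht0 : (t : ℂ) ≠ 0 := by exact_mod_cast (one_pos.trans ht).ne'
    refine (((hasDerivAt_neg w).mul_const (t : ℂ)).cexp.div_const (t : ℂ)).congr_deriv ?_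
    field_simp
  have hparam := (hasDerivAt_integral_of_dominated_loc_of_deriv_le
    (μ := volume.restrict (Ioi (1 : ℝ)))
    (F := fun (w : ℂ) (t : ℝ) => Complex.exp (-w * t) / t)
    (F' := fun (w : ℂ) (t : ℝ) => -Complex.exp (-w * t)) hnhds
    (Eventually.of_forall fun w => Measurable.aestronglyMeasurable (by fun_prop))
    (integrableOn_exp_neg_mul_div_Ioi hz one_pos) (by fun_prop)
    (ae_restrict_of_forall_mem measurableSet_Ioi hbound)
    (exp_neg_integrableOn_Ioi 1 (half_pos hz))
    (ae_restrict_of_forall_mem measurableSet_Ioi hderiv)).2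
  refine hparam.congr_deriv ?_
  rw [integral_neg, integral_exp_mul_complex_Ioi (by simpa)]
  simp [div_neg, neg_div]

lemma norm_expIntegralE₁_add_log_sub_le {z w : ℂ} (hz : 0 < z.re) (hw : 0 < w.re) :
    ‖(expIntegralE₁ w + Complex.log w) - (expIntegralE₁ z + Complex.log z)‖ ≤ ‖w - z‖ := by
  have hderiv : ∀ u ∈ {u : ℂ | 0 < u.re},
      HasDerivWithinAt (fun u => expIntegralE₁ u + Complex.log u)
        ((1 - Complex.exp (-u)) / u) {u | 0 < u.re} u := by
    intro u hu
    refine (((hasDerivAt_expIntegralE₁ hu).add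
      (Complex.hasDerivAt_log (Or.inl hu))).congr_deriv ?_).hasDerivWithinAt
    ring
  have hbound : ∀ u ∈ {u : ℂ | 0 < u.re}, ‖(1 - Complex.exp (-u)) / u‖ ≤ 1 := by
    intro u (hu : 0 < u.re)
    rw [norm_div]
    exact div_le_one_of_le₀ (norm_one_sub_exp_neg_le hu.le) (norm_nonneg u)
  simpa only [one_mul] using (convex_halfSpace_re_gt 0).norm_image_sub_le_of_norm_hasDerivWithin_le
    hderiv hbound hz hw

lemma integral_log_mul_exp_neg_Ioi :
    ∫ t in Ioi (0 : ℝ), Real.log t * Real.exp (-t) = -Real.eulerMascheroniConstant := by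
  have hΓ : Complex.Gamma =ᶠ[𝓝 1] Complex.GammaIntegral := by
    filter_upwards [(Complex.isOpen_re_gt 0).mem_nhds (by simp : (0 : ℝ) < (1 : ℂ).re)] with z hz
      using Complex.Gamma_eq_integral hz
  have h := ((Complex.hasDerivAt_GammaIntegral (s := 1) (by simp)).congr_of_eventuallyEq hΓ).unique
    Complex.hasDerivAt_Gamma_one
  simp only [sub_self, Complex.cpow_zero, one_mul, ← Complex.ofReal_mul] at h
  rw [integral_complex_ofReal] at h
  exact_mod_cast h

lemma integrableOn_log_mul_exp_neg_Ioi :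
    IntegrableOn (fun t : ℝ => Real.log t * Real.exp (-t)) (Ioi 0) :=
  -- A non-integrable function has integral `0`, whereas `-γ ≠ 0`.
  Integrable.of_integral_ne_zero <| by
    rw [integral_log_mul_exp_neg_Ioi]
    linarith [Real.one_half_lt_eulerMascheroniConstant]

lemma tendsto_exp_neg_mul_log_atTop :
    Tendsto (fun t : ℝ => Real.exp (-t) * Real.log t) atTop (𝓝 0) := by
  have h : (fun t : ℝ => Real.exp (-t) * Real.log t) =O[atTop] fun t => Real.exp (-t) * t :=
    (Asymptotics.isBigO_refl _ _).mul Real.isLittleO_log_id_atTop.isBigO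
  refine h.trans_tendsto ?_
  simpa [mul_comm] using Real.tendsto_pow_mul_exp_neg_atTop_nhds_zero 1

lemma expIntegralE₁_ofReal {x : ℝ} (hx : 0 < x) :
    expIntegralE₁ x = ((∫ t in Ioi x, Real.exp (-t) * t⁻¹ : ℝ) : ℂ) := by
  have hscale := integral_comp_mul_left_Ioi' (fun t : ℝ => Real.exp (-t) * t⁻¹) 1 hx
  rw [mul_one] at hscale
  rw [← hscale, expIntegralE₁, smul_eq_mul, ← integral_const_mul, ← integral_complex_ofReal]
  refine integral_congr_ae (Eventually.of_forall fun t => ?_)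
  have hx0 : (x : ℂ) ≠ 0 := by exact_mod_cast hx.ne'
  push_cast
  field_simp

lemma integral_exp_neg_mul_inv_Ioi {x : ℝ} (hx : 0 < x) :
    ∫ t in Ioi x, Real.exp (-t) * t⁻¹ =
      (∫ t in Ioi x, Real.log t * Real.exp (-t)) - Real.exp (-x) * Real.log x := by
  have hpos : ∀ t ∈ Ioi x, 0 < t := fun t ht => hx.trans ht
  have hexp : ∀ t ∈ Ioi x, HasDerivAt (fun t => Real.exp (-t)) (-Real.exp (-t)) t := fun t _ => by
    simpa using (hasDerivAt_neg t).exp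
  have hlogInt : IntegrableOn (fun t : ℝ => Real.log t * Real.exp (-t)) (Ioi x) :=
    integrableOn_log_mul_exp_neg_Ioi.mono_set (Ioi_subset_Ioi hx.le)
  have hinvInt : IntegrableOn (fun t : ℝ => Real.exp (-t) * t⁻¹) (Ioi x) := by
    refine IntegrableOn.congr_fun (integrableOn_exp_neg_mul_div_Ioi (z := 1) (by simp) hx).norm
      (fun t ht => ?_) measurableSet_Ioi
    simp [Complex.norm_exp, abs_of_pos (hpos t ht), div_eq_mul_inv]
  have hleft : Tendsto ((fun t => Real.exp (-t)) * Real.log) (𝓝[>] x)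
      (𝓝 (Real.exp (-x) * Real.log x)) :=
    ((by fun_prop : Continuous fun t : ℝ => Real.exp (-t)).continuousAt.mul
      (Real.continuousAt_log hx.ne')).tendsto.mono_left nhdsWithin_le_nhds
  rw [integral_Ioi_mul_deriv_eq_deriv_mul hexp (fun t ht => Real.hasDerivAt_log (hpos t ht).ne')
    hinvInt (by simpa [Pi.mul_def, mul_comm] using hlogInt.neg) hleft
    tendsto_exp_neg_mul_log_atTop]
  simp only [neg_mul, integral_neg, mul_comm (Real.exp _)]
  ring

lemma tendsto_expIntegralE₁_add_log_ofReal :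
    Tendsto (fun x : ℝ => expIntegralE₁ x + Complex.log x) (𝓝[>] 0)
      (𝓝 (-Real.eulerMascheroniConstant)) := by
  have htail : Tendsto (fun x : ℝ => ∫ t in Ioi x, Real.log t * Real.exp (-t)) (𝓝[>] 0)
      (𝓝 (-Real.eulerMascheroniConstant)) := by
    rw [← integral_log_mul_exp_neg_Ioi]
    refine ((aecover_Ioi_of_Ioi (tendsto_nhdsWithin_of_tendsto_nhds
      tendsto_id)).integral_tendsto_of_countably_generated
        integrableOn_log_mul_exp_neg_Ioi).congr' ?_
    filter_upwards [self_mem_nhdsWithin] with x (hx : 0 < x)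
    rw [id, Measure.restrict_restrict_of_subset (Ioi_subset_Ioi hx.le)]
  have hcorr : Tendsto (fun x : ℝ => (1 - Real.exp (-x)) * Real.log x) (𝓝[>] 0) (𝓝 0) := by
    have hbigO : (fun x : ℝ => 1 - Real.exp (-x)) =O[𝓝[>] 0] fun x => x := by
      refine Asymptotics.IsBigO.of_bound' ?_
      filter_upwards [self_mem_nhdsWithin] with x (hx : 0 < x)
      rw [Real.norm_of_nonneg hx.le, Real.norm_of_nonneg (by simpa using hx.le)]
      linarith [Real.one_sub_le_exp_neg x]
    refine (hbigO.mul (Asymptotics.isBigO_refl Real.log _)).trans_tendsto ?_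
    exact (Real.continuous_mul_log.tendsto' 0 0 (by simp)).mono_left nhdsWithin_le_nhds
  have hsum := (htail.add hcorr).ofReal
  rw [add_zero, Complex.ofReal_neg] at hsum
  refine hsum.congr' ?_
  filter_upwards [self_mem_nhdsWithin] with x (hx : 0 < x)
  rw [expIntegralE₁_ofReal hx, integral_exp_neg_mul_inv_Ioi hx, ← Complex.ofReal_log hx.le,
    ← Complex.ofReal_add]
  congr 1
  ring

lemma norm_expIntegralE₁_add_log_add_eulerMascheroni_le {z : ℂ} (hz : 0 < z.re) :
    ‖expIntegralE₁ z + Complex.log z + Real.eulerMascheroniConstant‖ ≤ ‖z‖ := by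
  have hleft := (tendsto_expIntegralE₁_add_log_ofReal.const_sub
    (expIntegralE₁ z + Complex.log z)).norm
  have hright : Tendsto (fun x : ℝ => ‖z - x‖) (𝓝[>] 0) (𝓝 ‖z‖) :=
    ((by fun_prop : Continuous fun x : ℝ => ‖z - x‖).tendsto' 0 _ (by simp)).mono_left
      nhdsWithin_le_nhds
  rw [sub_neg_eq_add] at hleft
  refine le_of_tendsto_of_tendsto hleft hright ?_
  filter_upwards [self_mem_nhdsWithin] with x (hx : 0 < x)
  exact norm_expIntegralE₁_add_log_sub_le (by simpa) hz

lemma tendsto_expIntegralE₁_add_log :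
    Tendsto (fun z => expIntegralE₁ z + Complex.log z) (𝓝[{z : ℂ | 0 < z.re}] 0)
      (𝓝 (-Real.eulerMascheroniConstant)) := by
  rw [tendsto_iff_norm_sub_tendsto_zero]
  refine squeeze_zero' (Eventually.of_forall fun z => norm_nonneg _) ?_
    (tendsto_norm_zero.mono_left nhdsWithin_le_nhds)
  filter_upwards [self_mem_nhdsWithin] with z hz
  simpa only [sub_neg_eq_add] using norm_expIntegralE₁_add_log_add_eulerMascheroni_le hz

lemma integrableOn_exp_mul_div_Iic {c : ℂ} (hc : 0 < c.re) {a : ℝ} (ha : a < 0) :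
    IntegrableOn (fun η : ℝ => Complex.exp (c * η) / η) (Iic a) := by
  rw [integrableOn_Iic_iff_integrableOn_Iio]
  have h := (integrableOn_exp_neg_mul_div_Ioi hc (neg_pos.2 ha)).neg.comp_neg_Iio
  simpa [div_neg] using h

lemma integral_exp_mul_div_Iic (c : ℂ) {a : ℝ} (ha : a < 0) :
    ∫ η in Iic a, Complex.exp (c * η) / η = -expIntegralE₁ (-c * a) := by
  have hscale :=
    integral_comp_mul_left_Ioi' (fun t : ℝ => Complex.exp (-c * t) / t) 1 (neg_pos.2 ha)
  rw [mul_one, ← integral_comp_neg_Iic] at hscale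
  have ha0 : (a : ℂ) ≠ 0 := by exact_mod_cast ha.ne
  calc ∫ η in Iic a, Complex.exp (c * η) / η
      = -∫ η in Iic a, Complex.exp (-c * ((-η : ℝ) : ℂ)) / ((-η : ℝ) : ℂ) := by
        simp [div_neg, integral_neg]
    _ = -expIntegralE₁ (-c * a) := by
        rw [← hscale, expIntegralE₁, ← integral_smul]
        congr 2 with t
        rw [Complex.real_smul]
        push_cast
        field_simp

lemma tendsto_exp_mul_mul_affine_atBot {c : ℂ} (hc : 0 < c.re) (α β : ℂ) :
    Tendsto (fun t : ℝ => Complex.exp (c * t) * (α * t + β)) atBot (𝓝 0) := by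
  have hexp : Tendsto (fun t : ℝ => Complex.exp (c * t)) atBot (𝓝 0) := by
    rw [Complex.tendsto_exp_nhds_zero_iff]
    simpa using tendsto_id.const_mul_atBot hc
  have hmul : Tendsto (fun t : ℝ => t * Complex.exp (c * t)) atBot (𝓝 0) := by
    have h := ((tendsto_rpow_mul_exp_neg_mul_atTop_nhds_zero 1 c.re hc).comp
      tendsto_neg_atBot_atTop).norm
    rw [tendsto_zero_iff_norm_tendsto_zero]
    simpa [Function.comp_def, Complex.norm_exp] using h
  have hsum := (hmul.const_mul α).add (hexp.const_mul β)
  simp only [mul_zero, add_zero] at hsum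
  exact hsum.congr fun t => by ring

lemma integrableOn_exp_mul_mul_affine_Iic {c : ℂ} (hc : 0 < c.re) (α β : ℂ) (a : ℝ) :
    IntegrableOn (fun t : ℝ => Complex.exp (c * t) * (α * t + β)) (Iic a) := by
  have hc2 : 0 < (c / 2).re := by simpa using hc
  have hbigO : (fun t : ℝ => Complex.exp (c * t) * (α * t + β)) =O[atBot]
      fun t : ℝ => Complex.exp (c / 2 * t) := by
    have h := (Asymptotics.isBigO_refl (fun t : ℝ => Complex.exp (c / 2 * t)) atBot).mul
      ((tendsto_exp_mul_mul_affine_atBot hc2 α β).isBigO_one ℂ)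
    refine h.congr (fun t => ?_) fun t => mul_one _
    rw [← mul_assoc, ← Complex.exp_add]
    ring_nf
  have hcont : Continuous fun t : ℝ => Complex.exp (c * t) * (α * t + β) := by fun_prop
  exact (hcont.locallyIntegrable.locallyIntegrableOn _).integrableOn_of_isBigO_atBot hbigO
    ⟨Iic 0, Iic_mem_atBot 0, integrableOn_exp_mul_complex_Iic hc2 0⟩

lemma integral_exp_mul_mul_affine_Iic {c : ℂ} (hc : 0 < c.re) (α β : ℂ) (a : ℝ) :
    ∫ t in Iic a, Complex.exp (c * t) * (α * t + β) =
      Complex.exp (c * a) * (α / c * a + (β / c - α / c ^ 2)) := by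
  have hc0 : c ≠ 0 := by rintro rfl; simp at hc
  have hderiv : ∀ t ∈ Iic a, HasDerivAt
      (fun t : ℝ => Complex.exp (c * t) * (α / c * t + (β / c - α / c ^ 2)))
      (Complex.exp (c * t) * (α * t + β)) t := by
    intro t _
    have hid : HasDerivAt (fun t : ℝ => (t : ℂ)) 1 t := Complex.ofRealCLM.hasDerivAt
    refine ((hid.const_mul c).cexp.mul ((hid.const_mul (α / c)).add_const _)).congr_deriv ?_
    field_simp
    ring
  rw [integral_Iic_of_hasDerivAt_of_tendsto' hderiv (integrableOn_exp_mul_mul_affine_Iic hc α β a)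
    (tendsto_exp_mul_mul_affine_atBot hc _ _), sub_zero]

lemma hasDerivAt_KbbS (s : ℂ) (η : ℝ) :
    HasDerivAt (KbbS s) (s ^ 2 * η * Complex.exp (Complex.I * s * η)) η := by
  have hphase : HasDerivAt (fun x : ℝ => Complex.I * s * x) (Complex.I * s) η := by
    simpa using Complex.ofRealCLM.hasDerivAt.const_mul (Complex.I * s)
  refine ((hphase.const_sub 1).mul hphase.cexp).congr_deriv ?_
  linear_combination (-s ^ 2 * η * Complex.exp (Complex.I * s * η)) * Complex.I_sq

lemma deriv_KbbS_sq_sub (s : ℂ) (η : ℝ) :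
    (deriv (KbbS s) η) ^ 2 - s ^ 2 * (KbbS s η) ^ 2 =
      Complex.exp (2 * Complex.I * s * η) *
        (2 * s ^ 4 * (η : ℂ) ^ 2 + 2 * Complex.I * s ^ 3 * η - s ^ 2) := by
  have hexp : Complex.exp (2 * Complex.I * s * η) = Complex.exp (Complex.I * s * η) ^ 2 := by
    rw [← Complex.exp_nat_mul]
    push_cast
    ring_nf
  rw [(hasDerivAt_KbbS s η).deriv, KbbS, hexp]
  linear_combination (-s ^ 4 * η ^ 2 * Complex.exp (Complex.I * s * η) ^ 2) * Complex.I_sq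

lemma csIntegrand_eq (s : ℂ) (η : ℝ) :
    csIntegrand s η =
      Complex.exp (2 * Complex.I * s * η) * (2 * s ^ 4 * η + 2 * Complex.I * s ^ 3) -
        s ^ 2 * (Complex.exp (2 * Complex.I * s * η) / η) := by
  rw [csIntegrand]
  ring

lemma two_mul_I_mul_re_pos {s : ℂ} (hs : s.im < 0) : 0 < (2 * Complex.I * s).re := by
  simpa using mul_neg_of_pos_of_neg two_pos hs

lemma neg_two_mul_I_mul_re_pos {s : ℂ} (hs : s.im < 0) {η₀ : ℝ} (hη₀ : η₀ < 0) :
    0 < (-2 * Complex.I * s * η₀).re := by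
  simpa using mul_pos_of_neg_of_neg (mul_neg_of_pos_of_neg two_pos hs) hη₀

lemma integrableOn_csIntegrand {s : ℂ} (hs : s.im < 0) {η₀ : ℝ} (hη₀ : η₀ < 0) :
    IntegrableOn (csIntegrand s) (Iic η₀) := by
  rw [funext (csIntegrand_eq s)]
  exact (integrableOn_exp_mul_mul_affine_Iic (two_mul_I_mul_re_pos hs) _ _ η₀).sub
    ((integrableOn_exp_mul_div_Iic (two_mul_I_mul_re_pos hs) hη₀).const_mul _)

lemma integral_csIntegrand {s : ℂ} (hs : s.im < 0) {η₀ : ℝ} (hη₀ : η₀ < 0) :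
    ∫ η in Iic η₀, csIntegrand s η =
      Complex.exp (2 * Complex.I * s * η₀) * (3 / 2 * s ^ 2 - Complex.I * s ^ 3 * η₀) +
        s ^ 2 * expIntegralE₁ (-2 * Complex.I * s * η₀) := by
  have hc := two_mul_I_mul_re_pos hs
  have hs0 : s ≠ 0 := by rintro rfl; simp at hs
  simp_rw [csIntegrand_eq]
  rw [integral_sub (integrableOn_exp_mul_mul_affine_Iic hc _ _ η₀)
      ((integrableOn_exp_mul_div_Iic hc hη₀).const_mul _),
    integral_const_mul, integral_exp_mul_mul_affine_Iic hc, integral_exp_mul_div_Iic _ hη₀]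
  have hcoeff : 2 * s ^ 4 / (2 * Complex.I * s) * η₀ + (2 * Complex.I * s ^ 3 / (2 * Complex.I * s)
      - 2 * s ^ 4 / (2 * Complex.I * s) ^ 2) = 3 / 2 * s ^ 2 - Complex.I * s ^ 3 * η₀ := by
    field_simp
    rw [Complex.I_sq]
    ring
  rw [hcoeff]
  ring_nf

lemma tendsto_integral_csIntegrand_add_log {s : ℂ} (hs : s.im < 0) :
    Tendsto (fun η₀ : ℝ => (∫ η in Iic η₀, csIntegrand s η)
        + s ^ 2 * Complex.log (-2 * Complex.I * s * η₀))
      (𝓝[<] 0) (𝓝 (s ^ 2 * (3 / 2 - Real.eulerMascheroniConstant))) := by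
  have harg : Tendsto (fun η₀ : ℝ => -2 * Complex.I * s * η₀) (𝓝[<] 0)
      (𝓝[{z : ℂ | 0 < z.re}] 0) := by
    refine tendsto_nhdsWithin_iff.2 ⟨?_, ?_⟩
    · exact ((by fun_prop : Continuous fun η₀ : ℝ => -2 * Complex.I * s * η₀).tendsto' 0 0
        (by simp)).mono_left nhdsWithin_le_nhds
    · filter_upwards [self_mem_nhdsWithin] with η₀ hη₀ using neg_two_mul_I_mul_re_pos hs hη₀
  have helem : Tendsto (fun η₀ : ℝ => Complex.exp (2 * Complex.I * s * η₀) *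
      (3 / 2 * s ^ 2 - Complex.I * s ^ 3 * η₀)) (𝓝[<] 0) (𝓝 (3 / 2 * s ^ 2)) :=
    ((by fun_prop : Continuous fun η₀ : ℝ => Complex.exp (2 * Complex.I * s * η₀) *
      (3 / 2 * s ^ 2 - Complex.I * s ^ 3 * η₀)).tendsto' 0 _ (by simp)).mono_left
      nhdsWithin_le_nhds
  have hsum := helem.add ((tendsto_expIntegralE₁_add_log.comp harg).const_mul (s ^ 2))
  rw [show 3 / 2 * s ^ 2 + s ^ 2 * -(Real.eulerMascheroniConstant : ℂ)
    = s ^ 2 * (3 / 2 - Real.eulerMascheroniConstant) by ring] at hsum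
  refine hsum.congr' ?_
  filter_upwards [self_mem_nhdsWithin] with η₀ hη₀
  rw [integral_csIntegrand hs hη₀, Function.comp_apply]
  ring

/-- With `Im s < 0` (Bunch–Davies iε prescription): the derivative of `K` is
`s²η e^{isη}` and `(∂_η K)² − s²K² = e^{2isη}(2s⁴η² + 2is³η − s²)`; the integral
`I(η₀)` converges for `η₀ < 0`; `−2isη₀` has strictly positive real part; and the
logarithmically-subtracted limit is
`lim_{η₀→0⁻} [I(η₀) + s² Log(−2isη₀)] = s²(3/2 − γ)`. -/
theorem chernSimons_graviton_integral (s : ℂ) (hs : s.im < 0) :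
    (∀ η : ℝ, deriv (KbbS s) η = s ^ 2 * η * Complex.exp (Complex.I * s * η)) ∧
    (∀ η : ℝ, (deriv (KbbS s) η) ^ 2 - s ^ 2 * (KbbS s η) ^ 2
        = Complex.exp (2 * Complex.I * s * η) *
            (2 * s ^ 4 * (η : ℂ) ^ 2 + 2 * Complex.I * s ^ 3 * η - s ^ 2)) ∧
    (∀ η₀ : ℝ, η₀ < 0 → IntegrableOn (csIntegrand s) (Set.Iic η₀)) ∧
    (∀ η₀ : ℝ, η₀ < 0 → 0 < (-2 * Complex.I * s * η₀).re) ∧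
    Tendsto
      (fun η₀ : ℝ => (∫ η in Set.Iic η₀, csIntegrand s η)
        + s ^ 2 * Complex.log (-2 * Complex.I * s * η₀))
      (nhdsWithin 0 (Set.Iio 0))
      (nhds (s ^ 2 * (3 / 2 - (Real.eulerMascheroniConstant : ℂ)))) :=
  ⟨fun η => (hasDerivAt_KbbS s η).deriv, deriv_KbbS_sq_sub s,
   fun _ => integrableOn_csIntegrand hs, fun _ => neg_two_mul_I_mul_re_pos hs,
   tendsto_integral_csIntegrand_add_log hs⟩

end
end

section
/- Let E be a real normed vector space, x₀ ∈ E, r > 0. Let F : E → ℂ be differentiable on B(x₀, r) with fderiv F x₀ = 0 and with x ↦ fderiv F x Lipschitz on B(x₀, r), and let G : E → ℂ be Lipschitz on B(x₀, r). Let x : ℝ → E satisfy x(λ) − x₀ = O(λ) as λ → 0. Then the perturbed action evaluated on the perturbed saddle agrees with its naive first-order expansion up to second order: ( F(x(λ)) + λ·G(x(λ)) ) − ( F(x₀) + λ·G(x₀) ) = O(λ²) as λ → 0. (This renders the paper's 'first-order approximation' lemma at the level of the on-shell classical action: evaluating the full action S₁ + λS₂ on the exact saddle versus on the unperturbed saddle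 of S₁ produces an error of order λ².) -/
open Filter Asymptotics Metric

/-!
Since `x₀` is critical and the derivative of `F` varies at most linearly near it, the mean value
inequality makes `F` quadratically flat at `x₀`: an `O(λ)` displacement of the saddle costs only
`O(λ²)`. The same displacement changes `G` by `O(λ)`, and the coupling supplies the other factor
of `λ`.
-/

open scoped Topology

theorem isBigO_sub_of_lipschitzOnWith {E V : Type*} [SeminormedAddCommGroup E]
    [SeminormedAddCommGroup V] {f : E → V} {K : NNReal} {s : Set E} {a : E}
    (hf : LipschitzOnWith K f s) (hs : s ∈ 𝓝 a) :
    (fun y => f y - f a) =O[𝓝 a] fun y => y - a := by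
  refine .of_bound K ?_
  filter_upwards [hs] with y hy
  exact hf.norm_sub_le hy (mem_of_mem_nhds hs)

section

variable {E V : Type*} [NormedAddCommGroup E] [NormedSpace ℝ E]
  [NormedAddCommGroup V] [NormedSpace ℝ V] {F : E → V} {x₀ : E}

theorem sub_isBigO_norm_sub_sq_of_fderiv_eq_zero (hdiff : ∀ᶠ y in 𝓝 x₀, DifferentiableAt ℝ F y)
    (hcrit : fderiv ℝ F x₀ = 0)
    (hF' : (fun y => fderiv ℝ F y - fderiv ℝ F x₀) =O[𝓝 x₀] fun y => y - x₀) :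
    (fun y => F y - F x₀) =O[𝓝 x₀] fun y => ‖y - x₀‖ ^ 2 := by
  have hderiv : fderiv ℝ F =O[𝓝 x₀] fun y => ‖y - x₀‖ ^ (1 : ℝ) := by
    simpa only [hcrit, sub_zero, Real.rpow_one] using hF'.norm_right
  simpa only [one_add_one_eq_two, Real.rpow_two] using
    sub_isBigO_norm_rpow_add_one_of_fderiv zero_le_one hdiff hderiv

theorem first_order_approximation_lemma_general {α 𝕜 : Type*} [NormedField 𝕜] [NormedSpace 𝕜 V]
    {G : E → V} {l : Filter α} {ε : α → 𝕜} {x : α → E}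
    (hdiff : ∀ᶠ y in 𝓝 x₀, DifferentiableAt ℝ F y) (hcrit : fderiv ℝ F x₀ = 0)
    (hF' : (fun y => fderiv ℝ F y - fderiv ℝ F x₀) =O[𝓝 x₀] fun y => y - x₀)
    (hG : (fun y => G y - G x₀) =O[𝓝 x₀] fun y => y - x₀)
    (hε : Tendsto ε l (𝓝 0)) (hx : (fun t => x t - x₀) =O[l] ε) :
    (fun t => (F (x t) + ε t • G (x t)) - (F x₀ + ε t • G x₀)) =O[l] fun t => ε t ^ 2 := by
  have hx₀ : Tendsto x l (𝓝 x₀) := tendsto_sub_nhds_zero_iff.mp (hx.trans_tendsto hε)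
  have hFx : (fun t => F (x t) - F x₀) =O[l] fun t => ε t ^ 2 :=
    ((sub_isBigO_norm_sub_sq_of_fderiv_eq_zero hdiff hcrit hF').comp_tendsto hx₀).trans
      (hx.norm_left.pow 2)
  have hGx : (fun t => ε t • (G (x t) - G x₀)) =O[l] fun t => ε t ^ 2 := by
    simpa only [smul_eq_mul, sq, Function.comp_apply] using
      (isBigO_refl ε l).smul ((hG.comp_tendsto hx₀).trans hx)
  simpa only [smul_sub, add_sub_add_comm] using hFx.add hGx

end

/-- First-order approximation lemma at the level of the on-shell classical action:
with `F` (the unperturbed action `S₁`) differentiable on a ball around the saddle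
`x₀` with `fderiv F x₀ = 0` and Lipschitz Fréchet derivative, `G` (the perturbing
action `S₂`) Lipschitz on the ball, and `x(λ) − x₀ = O(λ)`, the perturbed action
evaluated on the perturbed saddle agrees with its naive first-order expansion up
to second order: `(F(x(λ)) + λG(x(λ))) − (F(x₀) + λG(x₀)) = O(λ²)`. -/
theorem first_order_approximation_lemma {E : Type*} [NormedAddCommGroup E] [NormedSpace ℝ E]
    (F G : E → ℂ) (x₀ : E) (r : ℝ) (hr : 0 < r)
    (hdiff : DifferentiableOn ℝ F (ball x₀ r))
    (hcrit : fderiv ℝ F x₀ = 0)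
    (C : NNReal) (hlip : LipschitzOnWith C (fun x => fderiv ℝ F x) (ball x₀ r))
    (D : NNReal) (hG : LipschitzOnWith D G (ball x₀ r))
    (x : ℝ → E)
    (hx : (fun lam : ℝ => x lam - x₀) =O[nhds (0 : ℝ)] fun lam => lam) :
    (fun lam : ℝ => (F (x lam) + (lam : ℂ) * G (x lam)) - (F x₀ + (lam : ℂ) * G x₀))
      =O[nhds (0 : ℝ)] fun lam => lam ^ 2 := by
  have hball : ball x₀ r ∈ 𝓝 x₀ := ball_mem_nhds x₀ hr
  simpa only [Complex.real_smul, id_eq] using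
    first_order_approximation_lemma_general (hdiff.eventually_differentiableAt hball) hcrit
      (isBigO_sub_of_lipschitzOnWith hlip hball) (isBigO_sub_of_lipschitzOnWith hG hball)
      tendsto_id hx
end
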